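/- Let R be a Prüfer v-multiplication domain. Then R is a t#_P-domain if and only if each t-linked overring of R is a t#-domain. -/

import Mathlib

/-!
For `P` a `t`-prime of a PVMD `R`, the ring `R_P` is a valuation domain, and conversely a nonzero
prime with valuation localization, in any domain, is a `t`-ideal (`ValAt.isTIdeal`). Moreover
`R_{Φ(Λ)} = ⋂_{P ∈ Λ} R_P` for every set `Λ` of `t`-primes (`RPhi_eq`), since `(R : x)` is a
`t`-ideal.

Let `T` be a `t`-linked overring of `R`. A maximal `t`-ideal `N` of `T` contracts to a `t`-prime
`P = N ∩ R` (`comap_isTPrime`), and `T_N = R_P` because `T_N` lies over the valuation ring `R_P`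
with `N ∩ R = P` (`locDvd_comap_iff`). Hence `N ↦ N ∩ R` is injective, and two distinct such
contractions are `t`-comaximal: otherwise they lie in one maximal `t`-ideal `M` of `R`, so they
are comparable because `R_M` is a valuation domain, and then so are the corresponding maximal
`t`-ideals of `T`. The `t#_P` property of `R` applied to contractions thus gives the `t#` property
of `T` (`tSharp_of_tSharpP`).

Conversely, suppose `⋂_{P ∈ Λ₁} R_P = ⋂_{Q ∈ Λ₂} R_Q = T` for `t`-comaximal `Λ₁`, `Λ₂`, and let
`P ∈ Λ₁`, `P ∉ Λ₂`. The ring `T` is `t`-linked, hence a `t#`-domain. For `P`, as for each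
`Q ∈ Λ₂`, the prime `P R_P ∩ T` has valuation localization `R_P`, so it lies in a maximal
`t`-ideal `N` of `T`. No `Q R_Q ∩ T` lies in `N`, since `P + Q ⊆ N ∩ R` would contradict
`t`-comaximality. So each `R_Q` contains `T_{N_Q}` for a maximal `t`-ideal `N_Q ≠ N`, and
`T = ⋂_{N' ≠ N} T_{N'}`, against the `t#` property (`not_comaximal`).

Fractional ideals and localizations are handled by divisibility in the ring itself: `a / b ∈ R_P`
is `LocDvd P a b`. This makes the passage between the quotient fields of `R` and `T` unnecessary.
-/

/-
Definitions following S. Gabelli, E. Houston, T. G. Lucas,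
"The t#-property for integral domains".

All the star-operation notions (`v`, `t`, maximal `t`-ideals, etc.) are defined for a
commutative ring `R` via its total quotient field `FractionRing R`; in all theorems `R`
is assumed to be an integral domain, so `FractionRing R` is its quotient field `K`.
-/

noncomputable section

namespace TSharpPaper

variable (R : Type*) [CommRing R]

/-- The image of an integral ideal in the quotient field, as an `R`-submodule. -/
def idealSub (I : Ideal R) : Submodule R (FractionRing R) :=
  Submodule.map (Algebra.linearMap R (FractionRing R)) I

/-- The divisorial closure `I_v = (I⁻¹)⁻¹` of an integral ideal, as an integral ideal.
Here for a submodule `J` of `K`, `1 / J = {x ∈ K : xJ ⊆ R}` is `J⁻¹`. -/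
def vIdeal (I : Ideal R) : Ideal R :=
  Submodule.comap (Algebra.linearMap R (FractionRing R))
    ((1 : Submodule R (FractionRing R)) / (1 / idealSub R I))

/-- The `t`-closure `I_t = ⋃ J_v`, the union over all nonzero finitely generated
subideals `J` of `I`. -/
def tIdeal (I : Ideal R) : Ideal R :=
  ⨆ (J : Ideal R) (_ : J.FG) (_ : J ≠ ⊥) (_ : J ≤ I), vIdeal R J

/-- A (nonzero) integral ideal is divisorial if `I = I_v`. -/
def IsDivisorialIdeal (I : Ideal R) : Prop := I ≠ ⊥ ∧ vIdeal R I = I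

/-- A (nonzero) integral ideal is a `t`-ideal if `I = I_t`. -/
def IsTIdeal (I : Ideal R) : Prop := I ≠ ⊥ ∧ tIdeal R I = I

/-- A `t`-prime is a prime `t`-ideal. -/
def IsTPrime (P : Ideal R) : Prop := P.IsPrime ∧ IsTIdeal R P

/-- The set `t-Max(R)` of maximal `t`-ideals: integral ideals maximal among proper
integral `t`-ideals. -/
def tMax : Set (Ideal R) :=
  {M | IsTIdeal R M ∧ M ≠ ⊤ ∧ ∀ J : Ideal R, IsTIdeal R J → J ≠ ⊤ → M ≤ J → J = M}

/-- The localization `R_P` of `R` at (the complement of) a prime `P`, viewed as a subset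
of the quotient field. -/
def locSet (P : Ideal R) : Set (FractionRing R) :=
  {x | ∃ r s : R, s ∉ P ∧ x * algebraMap R (FractionRing R) s = algebraMap R (FractionRing R) r}

/-- The image of `R` in its quotient field. -/
def imageR : Set (FractionRing R) := Set.range (algebraMap R (FractionRing R))

/-- `R` is a `t#`-domain if `⋂_{M ∈ 𝔐₁} R_M ≠ ⋂_{M ∈ 𝔐₂} R_M` for any two distinct
subsets `𝔐₁, 𝔐₂` of `t-Max(R)`. -/
def IsTSharp : Prop :=
  ∀ 𝔐₁ 𝔐₂ : Set (Ideal R), 𝔐₁ ⊆ tMax R → 𝔐₂ ⊆ tMax R → 𝔐₁ ≠ 𝔐₂ →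
    (⋂ M ∈ 𝔐₁, locSet R M) ≠ ⋂ M ∈ 𝔐₂, locSet R M

/-- The conductor `(R :_R u) = {r ∈ R : r·u ∈ R}` of an element `u` of the quotient
field. -/
def colonIdeal (u : FractionRing R) : Ideal R :=
  Submodule.comap (Algebra.linearMap R (FractionRing R))
    (Submodule.comap (LinearMap.mulLeft R u) (1 : Submodule R (FractionRing R)))

/-- `R` is `v`-coherent if for each nonzero finitely generated ideal `I` of `R`,
`I⁻¹ = J_v` for some finitely generated fractional ideal `J`. -/
def IsVCoherent : Prop :=
  ∀ I : Ideal R, I ≠ ⊥ → I.FG →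
    ∃ J : Submodule R (FractionRing R), J.FG ∧
      (1 : Submodule R (FractionRing R)) / idealSub R I = 1 / (1 / J)

/-- An ideal is `v`-finite if it equals `J_v` for some finitely generated ideal `J`. -/
def IsVFinite (I : Ideal R) : Prop := ∃ J : Ideal R, J.FG ∧ I = vIdeal R J

/-- `Φ(Λ)`: the set of all integral `t`-ideals `I` of `R` with `I ⊄ P` for every
`P ∈ Λ`. -/
def Phi (Λ : Set (Ideal R)) : Set (Ideal R) :=
  {I | IsTIdeal R I ∧ ∀ P ∈ Λ, ¬ I ≤ P}

/-- `Φ(Λ)` is `v`-finite if every `t`-ideal in `Φ(Λ)` contains a `v`-finite `t`-ideal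
belonging to `Φ(Λ)`. -/
def PhiVFinite (Λ : Set (Ideal R)) : Prop :=
  ∀ I ∈ Phi R Λ, ∃ J ∈ Phi R Λ, J ≤ I ∧ IsVFinite R J

/-- The generalized ring of quotients `R_{Φ(Λ)} = {x ∈ K : xI ⊆ R for some I ∈ Φ(Λ)}`. -/
def RPhi (Λ : Set (Ideal R)) : Set (FractionRing R) :=
  {x | ∃ I ∈ Phi R Λ, ∀ a ∈ I, x * algebraMap R (FractionRing R) a ∈ imageR R}

/-- `Λ` is a set of pairwise incomparable `t`-primes of `R`. -/
def IncompTPrimes (Λ : Set (Ideal R)) : Prop :=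
  (∀ P ∈ Λ, IsTPrime R P) ∧ ∀ P ∈ Λ, ∀ Q ∈ Λ, P ≤ Q → P = Q

/-- `R` is a Prüfer `v`-multiplication domain if `R_M` is a valuation domain for every
maximal `t`-ideal `M` of `R`. -/
def IsPVMD [IsDomain R] : Prop :=
  ∀ M ∈ tMax R, ∀ x : FractionRing R, x ≠ 0 → x ∈ locSet R M ∨ x⁻¹ ∈ locSet R M

/-- `R` is a Mori domain: the ascending chain condition holds on integral divisorial
ideals. -/
def IsMori : Prop :=
  ∀ f : ℕ → Ideal R, (∀ n, IsDivisorialIdeal R (f n)) → (∀ n, f n ≤ f (n + 1)) →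
    ∃ n, ∀ m, n ≤ m → f m = f n

/-- The localization `T_Q` of a subring `T` of the quotient field of `R` at (the
complement of) an ideal `Q` of `T`, viewed as a subset of the quotient field of `R`. -/
def locSetSub (T : Subring (FractionRing R)) (Q : Ideal T) : Set (FractionRing R) :=
  {x | ∃ r s : T, s ∉ Q ∧ x * (s : FractionRing R) = (r : FractionRing R)}

/-- `T` is an overring of `R`: a subring of the quotient field containing (the image
of) `R`. -/
def IsOverring (T : Subring (FractionRing R)) : Prop :=
  ∀ r : R, algebraMap R (FractionRing R) r ∈ T

/-- The canonical ring homomorphism from `R` to an overring `T`; `M ∩ R` is the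
contraction `Ideal.comap (intoOverring R T h) M`. -/
def intoOverring (T : Subring (FractionRing R)) (h : IsOverring R T) : R →+* T :=
  (algebraMap R (FractionRing R)).codRestrict T h

/-- `T` is a `t`-flat overring of `R`: `T_M = R_{M ∩ R}` for each maximal `t`-ideal `M`
of `T`. -/
def IsTFlat (T : Subring (FractionRing R)) : Prop :=
  ∃ h : IsOverring R T, ∀ M ∈ tMax (↥T),
    locSetSub R T M = locSet R (Ideal.comap (intoOverring R T h) M)

/-- `T` is `t`-linked over `R`: for each nonzero finitely generated ideal `I` of `R` with
`(R : I) = R` one has `(T : IT) = T`. -/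
def IsTLinked (T : Subring (FractionRing R)) : Prop :=
  ∀ I : Ideal R, I ≠ ⊥ → I.FG →
    (1 : Submodule R (FractionRing R)) / idealSub R I = 1 →
    {x : FractionRing R | ∀ a ∈ I, x * algebraMap R (FractionRing R) a ∈ T} =
      (T : Set (FractionRing R))

/-- `T` is a `t`-subintersection of `R`: `T = ⋂_{P ∈ Λ} R_P` for some set `Λ` of
`t`-primes of `R`. -/
def IsTSubintersection (T : Subring (FractionRing R)) : Prop :=
  ∃ Λ : Set (Ideal R), (∀ P ∈ Λ, IsTPrime R P) ∧
    (T : Set (FractionRing R)) = ⋂ P ∈ Λ, locSet R P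

/-- `(P : P) = {x ∈ K : xP ⊆ P}`, as a subring of the quotient field of `R`. -/
def colonPP (P : Ideal R) : Subring (FractionRing R) where
  carrier := {x | ∀ a ∈ P, x * algebraMap R (FractionRing R) a ∈ idealSub R P}
  one_mem' := by
    intro a ha
    rw [one_mul]
    exact Submodule.mem_map_of_mem ha
  mul_mem' := by
    intro x y hx hy a ha
    rcases hy a ha with ⟨b, hb, hby⟩
    rw [mul_assoc, ← hby]
    exact hx b hb
  add_mem' := by
    intro x y hx hy a ha
    rw [add_mul]
    exact Submodule.add_mem _ (hx a ha) (hy a ha)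
  zero_mem' := by
    intro a ha
    rw [zero_mul]
    exact Submodule.zero_mem _
  neg_mem' := by
    intro x hx a ha
    rw [neg_mul]
    exact Submodule.neg_mem _ (hx a ha)

/-- `R` is a `t#_P`-domain: for sets `Λ₁ ≠ Λ₂` of `t`-primes such that `(P + Q)_t = R`
for distinct `P ∈ Λ₁`, `Q ∈ Λ₂`, one has `R_{Φ(Λ₁)} ≠ R_{Φ(Λ₂)}`. -/
def IsTSharpP : Prop :=
  ∀ Λ₁ Λ₂ : Set (Ideal R), (∀ P ∈ Λ₁, IsTPrime R P) → (∀ Q ∈ Λ₂, IsTPrime R Q) →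
    (∀ P ∈ Λ₁, ∀ Q ∈ Λ₂, P ≠ Q → tIdeal R (P ⊔ Q) = ⊤) →
    Λ₁ ≠ Λ₂ → RPhi R Λ₁ ≠ RPhi R Λ₂

/-- A `t`-localizing system of ideals of `R`: a set of integral `t`-ideals closed under
`t`-multiplication and satisfying the two localizing-system closure properties. -/
def IsTLocalizingSystem (Φ : Set (Ideal R)) : Prop :=
  (∀ I ∈ Φ, IsTIdeal R I) ∧
  (∀ I ∈ Φ, ∀ J ∈ Φ, tIdeal R (I * J) ∈ Φ) ∧
  (∀ I ∈ Φ, ∀ J : Ideal R, IsTIdeal R J → I ≤ J → J ∈ Φ) ∧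
  (∀ I ∈ Φ, ∀ J : Ideal R, IsTIdeal R J →
    (∀ a ∈ I, tIdeal R (Submodule.colon J (Ideal.span {a})) ∈ Φ) → J ∈ Φ)

/-- The ascending chain condition on `t`-primes of `R`. -/
def ACCTPrimes : Prop :=
  ∀ f : ℕ → Ideal R, (∀ n, IsTPrime R (f n)) → (∀ n, f n ≤ f (n + 1)) →
    ∃ n, ∀ m, n ≤ m → f m = f n

/-- The ascending chain condition on radical `t`-ideals of `R`. -/
def ACCRadicalTIdeals : Prop :=
  ∀ f : ℕ → Ideal R, (∀ n, IsTIdeal R (f n) ∧ (f n).radical = f n) →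
    (∀ n, f n ≤ f (n + 1)) → ∃ n, ∀ m, n ≤ m → f m = f n

/-- A prime `P` is branched if there is a `PR_P`-primary ideal of `R_P` different from
`PR_P` (the maximal ideal of `R_P`). -/
def IsBranched (P : Ideal R) (hP : P.IsPrime) : Prop :=
  letI := hP
  ∃ Q : Ideal (Localization.AtPrime P), Q.IsPrimary ∧
    Q ≠ IsLocalRing.maximalIdeal (Localization.AtPrime P)

/-- A prime ideal of a domain has height one. -/
def HeightOne (Q : Ideal R) : Prop :=
  Q ≠ ⊥ ∧ ∀ P : Ideal R, P.IsPrime → P < Q → P = ⊥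

/-- A nonzero integral ideal `I` is `t`-invertible: `(I I⁻¹)_t = R`. -/
def IsTInvertible (I : Ideal R) : Prop :=
  tIdeal R (Submodule.comap (Algebra.linearMap R (FractionRing R))
    (idealSub R I * ((1 : Submodule R (FractionRing R)) / idealSub R I))) = ⊤

variable {σ : Type*}

/-- An upper to zero: a prime ideal `Q` of `R[{X_α}]` with `Q ∩ R = 0`. -/
def IsUpperToZero (Q : Ideal (MvPolynomial σ R)) : Prop :=
  Q.IsPrime ∧ Ideal.comap (MvPolynomial.C : R →+* MvPolynomial σ R) Q = ⊥

/-- The content `c(f)` of a polynomial: the ideal of `R` generated by its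
coefficients. -/
def mvContent (f : MvPolynomial σ R) : Ideal R :=
  Ideal.span (Set.range fun m => MvPolynomial.coeff m f)

/-- The content `c(I)` of an ideal of `R[{X_α}]`: the ideal of `R` generated by the
coefficients of all polynomials in `I`. -/
def mvContentIdeal (Q : Ideal (MvPolynomial σ R)) : Ideal R :=
  Ideal.span {r | ∃ f ∈ Q, ∃ m, MvPolynomial.coeff m f = r}

/-- `R({X_α})`: the localization of `R[{X_α}]` at the (multiplicatively closed) set of
polynomials of unit content. -/
def mvNagata (σ : Type*) : Type _ :=
  Localization (Submonoid.closure {f : MvPolynomial σ R | mvContent R f = ⊤})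

instance (σ : Type*) : CommRing (mvNagata R σ) := by
  unfold mvNagata; infer_instance

/-- `R⟨{X_α}⟩`: the localization of `R[{X_α}]` at the (multiplicatively closed) set
`S = {f : c(f)_v = R}`. -/
def mvKronecker (σ : Type*) : Type _ :=
  Localization (Submonoid.closure {f : MvPolynomial σ R | vIdeal R (mvContent R f) = ⊤})

instance (σ : Type*) : CommRing (mvKronecker R σ) := by
  unfold mvKronecker; infer_instance



section Helpers

variable {R} {T : Type*} [CommRing T]

/-! ### Elementwise descriptions -/

/-- `a / b ∈ R_P`, expressed by divisibility in `R`; meaningful when `b ≠ 0`. -/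
def LocDvd (P : Ideal R) (a b : R) : Prop := ∃ s, s ∉ P ∧ b ∣ s * a

/-- `R_P` is a valuation ring, expressed by divisibility in `R`. -/
def ValAt (P : Ideal R) : Prop := ∀ a b : R, LocDvd P a b ∨ LocDvd P b a

/-- `I_t ≠ R`, phrased as: no nonzero finitely generated `J ⊆ I` has `1 ∈ J_v`. -/
def TProper (I : Ideal R) : Prop :=
  ∀ J : Ideal R, J.FG → J ≠ ⊥ → J ≤ I → (1 : R) ∉ vIdeal R J

theorem ValAt.mono {P Q : Ideal R} (h : ValAt Q) (hPQ : P ≤ Q) : ValAt P := fun a b =>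
  (h a b).imp (fun ⟨s, hs, hd⟩ => ⟨s, fun hP => hs (hPQ hP), hd⟩)
    (fun ⟨s, hs, hd⟩ => ⟨s, fun hP => hs (hPQ hP), hd⟩)

theorem exists_frac [IsDomain R] (x : FractionRing R) :
    ∃ a b : R, b ≠ 0 ∧ x * algebraMap R (FractionRing R) b = algebraMap R (FractionRing R) a := by
  obtain ⟨⟨a, b⟩, h⟩ := IsLocalization.surj (nonZeroDivisors R) x
  exact ⟨a, b, nonZeroDivisors.ne_zero b.2, h⟩

theorem algebraMap_inj [IsDomain R] {a b : R}
    (h : algebraMap R (FractionRing R) a = algebraMap R (FractionRing R) b) : a = b :=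
  IsFractionRing.injective R (FractionRing R) h

theorem algebraMap_ne [IsDomain R] {b : R} (hb : b ≠ 0) :
    algebraMap R (FractionRing R) b ≠ 0 := fun h => hb (algebraMap_inj (by rw [h, map_zero]))

/-- For `x = a / b`, `x * c ∈ R` means `b ∣ a * c`. -/
theorem mem_range_iff_dvd [IsDomain R] {x : FractionRing R} {a b : R} (hb : b ≠ 0)
    (hx : x * algebraMap R (FractionRing R) b = algebraMap R (FractionRing R) a) (c : R) :
    (∃ r, algebraMap R (FractionRing R) r = x * algebraMap R (FractionRing R) c) ↔
      b ∣ a * c := by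
  constructor
  · rintro ⟨r, hr⟩
    refine ⟨r, algebraMap_inj ?_⟩
    rw [map_mul, map_mul, hr, ← hx]; ring
  · rintro ⟨r, hr⟩
    refine ⟨r, mul_left_cancel₀ (algebraMap_ne hb) ?_⟩
    rw [← map_mul, ← hr, map_mul, ← hx]; ring

theorem mem_locSet_iff [IsDomain R] {x : FractionRing R} {a b : R} (hb : b ≠ 0)
    (hx : x * algebraMap R (FractionRing R) b = algebraMap R (FractionRing R) a) (P : Ideal R) :
    x ∈ locSet R P ↔ LocDvd P a b := by
  constructor
  · rintro ⟨r, s, hs, h⟩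
    refine ⟨s, hs, ?_⟩
    rw [mul_comm, ← mem_range_iff_dvd hb hx]
    exact ⟨r, h.symm⟩
  · rintro ⟨s, hs, h⟩
    rw [mul_comm, ← mem_range_iff_dvd hb hx] at h
    obtain ⟨r, hr⟩ := h
    exact ⟨r, s, hs, hr.symm⟩

theorem mem_inv_iff [IsDomain R] {x : FractionRing R} {a b : R} (hb : b ≠ 0)
    (hx : x * algebraMap R (FractionRing R) b = algebraMap R (FractionRing R) a) (I : Ideal R) :
    x ∈ (1 : Submodule R (FractionRing R)) / idealSub R I ↔ ∀ j ∈ I, b ∣ a * j := by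
  rw [Submodule.mem_div_iff_forall_mul_mem]
  constructor
  · intro h j hj
    rw [← mem_range_iff_dvd hb hx]
    exact Submodule.mem_one.1 (h _ (Submodule.mem_map_of_mem hj))
  · rintro h _ ⟨j, hj, rfl⟩
    exact Submodule.mem_one.2 ((mem_range_iff_dvd hb hx j).2 (h j hj))

theorem mem_vIdeal_iff [IsDomain R] {I : Ideal R} {x : R} :
    x ∈ vIdeal R I ↔ ∀ a b : R, b ≠ 0 → (∀ j ∈ I, b ∣ a * j) → b ∣ a * x := by
  unfold vIdeal
  rw [Submodule.mem_comap, Submodule.mem_div_iff_forall_mul_mem]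
  constructor
  · intro h a b hb hab
    have hx : (algebraMap R (FractionRing R) a / algebraMap R (FractionRing R) b) *
        algebraMap R (FractionRing R) b = algebraMap R (FractionRing R) a :=
      div_mul_cancel₀ _ (algebraMap_ne hb)
    obtain ⟨r, hr⟩ := Submodule.mem_one.1 (h _ ((mem_inv_iff hb hx I).2 hab))
    rw [← mem_range_iff_dvd hb hx]
    exact ⟨r, by rw [hr, mul_comm]; rfl⟩
  · intro h y hy
    obtain ⟨a, b, hb, hyab⟩ := exists_frac y
    obtain ⟨r, hr⟩ := (mem_range_iff_dvd hb hyab x).2 (h a b hb ((mem_inv_iff hb hyab I).1 hy))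
    exact Submodule.mem_one.2 ⟨r, by rw [hr, mul_comm]; rfl⟩

theorem le_vIdeal [IsDomain R] (I : Ideal R) : I ≤ vIdeal R I := fun x hx =>
  mem_vIdeal_iff.2 fun _ _ _ h => h x hx

/-- Monotonicity and idempotence of the `v`-operation in one statement. -/
theorem vIdeal_le_of_le [IsDomain R] {I J : Ideal R} (h : I ≤ vIdeal R J) :
    vIdeal R I ≤ vIdeal R J := fun _ hx =>
  mem_vIdeal_iff.2 fun a b hb hab =>
    mem_vIdeal_iff.1 hx a b hb fun _ hj => mem_vIdeal_iff.1 (h hj) a b hb hab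

theorem vIdeal_mono [IsDomain R] {I J : Ideal R} (h : I ≤ J) : vIdeal R I ≤ vIdeal R J :=
  vIdeal_le_of_le (h.trans (le_vIdeal J))

theorem tIdeal_le_iff {I A : Ideal R} :
    tIdeal R I ≤ A ↔ ∀ J : Ideal R, J.FG → J ≠ ⊥ → J ≤ I → vIdeal R J ≤ A := by
  simp only [tIdeal, iSup_le_iff]

theorem le_tIdeal [IsDomain R] (I : Ideal R) : I ≤ tIdeal R I := by
  intro x hx
  by_cases h0 : x = 0
  · rw [h0]; exact zero_mem _
  · exact tIdeal_le_iff.1 le_rfl (Ideal.span {x}) (Submodule.fg_span_singleton x)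
      (by simpa using h0) (by simpa [Ideal.span_le] using hx)
      (le_vIdeal _ (Ideal.mem_span_singleton_self x))

theorem isTIdeal_iff [IsDomain R] {I : Ideal R} :
    IsTIdeal R I ↔ I ≠ ⊥ ∧ ∀ J : Ideal R, J.FG → J ≠ ⊥ → J ≤ I → vIdeal R J ≤ I := by
  unfold IsTIdeal
  rw [← tIdeal_le_iff]
  exact and_congr_right fun _ => ⟨fun h => h.le, fun h => le_antisymm h (le_tIdeal I)⟩

theorem IsTIdeal.tProper [IsDomain R] {I : Ideal R} (h : IsTIdeal R I) (hI : I ≠ ⊤) :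
    TProper I := fun J hJ hJ0 hJI h1 =>
  hI ((Ideal.eq_top_iff_one I).2 ((isTIdeal_iff.1 h).2 J hJ hJ0 hJI h1))

theorem tProper_of_tIdeal_ne_top {I : Ideal R} (h : tIdeal R I ≠ ⊤) : TProper I :=
  fun J hJ hJ0 hJI h1 =>
    h ((Ideal.eq_top_iff_one _).2 (tIdeal_le_iff.1 le_rfl J hJ hJ0 hJI h1))

theorem tIdeal_le_of_le [IsDomain R] {I A : Ideal R} (h : IsTIdeal R A) (hI : I ≤ A) :
    tIdeal R I ≤ A :=
  tIdeal_le_iff.2 fun J hJ hJ0 hJI => (isTIdeal_iff.1 h).2 J hJ hJ0 (hJI.trans hI)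

/-! ### Maximal `t`-ideals -/

/-- The finitely generated `v`-closures inside `I_t` are directed: a finitely generated ideal
each of whose elements lies in some `J_v` lies in a single `J_v`. -/
theorem exists_common_v [IsDomain R] {M A : Ideal R} (hM : M ≠ ⊥) (hA : A.FG)
    (h : ∀ y ∈ A, ∃ J : Ideal R, J.FG ∧ J ≤ M ∧ y ∈ vIdeal R J) :
    ∃ J : Ideal R, J.FG ∧ J ≠ ⊥ ∧ J ≤ M ∧ A ≤ vIdeal R J := by
  classical
  obtain ⟨S, rfl⟩ := hA
  have key : ∀ S' : Finset R, S' ⊆ S →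
      ∃ J : Ideal R, J.FG ∧ J ≤ M ∧ ∀ y ∈ S', y ∈ vIdeal R J := by
    intro S'
    induction S' using Finset.induction_on with
    | empty => exact fun _ => ⟨⊥, Submodule.fg_bot, bot_le, by simp⟩
    | insert z S' _ ih =>
      intro hS
      obtain ⟨J, hJ, hJM, hy⟩ := ih fun y hy => hS (Finset.mem_insert_of_mem hy)
      obtain ⟨J', hJ', hJM', hz⟩ := h z
        (Submodule.subset_span (hS (Finset.mem_insert_self z S')))
      refine ⟨J ⊔ J', Submodule.FG.sup hJ hJ', sup_le hJM hJM', fun y hyS => ?_⟩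
      rcases Finset.mem_insert.1 hyS with rfl | hyS
      · exact vIdeal_mono le_sup_right hz
      · exact vIdeal_mono le_sup_left (hy y hyS)
  obtain ⟨J, hJ, hJM, hy⟩ := key S subset_rfl
  obtain ⟨m, hmM, hm0⟩ := Submodule.exists_mem_ne_zero_of_ne_bot hM
  refine ⟨J ⊔ Ideal.span {m}, Submodule.FG.sup hJ (Submodule.fg_span_singleton m), ?_,
    sup_le hJM (by simpa [Ideal.span_le] using hmM), ?_⟩
  · intro hb
    have : m ∈ J ⊔ Ideal.span {m} := Ideal.mem_sup_right (Ideal.mem_span_singleton_self m)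
    rw [hb] at this
    exact hm0 (by simpa using this)
  · rw [Submodule.span_le]
    exact fun y hyS => vIdeal_mono le_sup_left (hy y hyS)

theorem exists_tMax_ge [IsDomain R] {I : Ideal R} (hI0 : I ≠ ⊥) (hI : TProper I) :
    ∃ M ∈ tMax R, I ≤ M := by
  obtain ⟨M, hIM, hM⟩ := zorn_le_nonempty₀ {A : Ideal R | TProper A} (by
    intro c hc hchain A hA
    refine ⟨sSup c, ?_, fun z hz => le_sSup hz⟩
    intro J hJ hJ0 hJc h1
    have hcomp := (Submodule.fg_iff_compact J).1 hJ
    obtain ⟨B, hB, hJB⟩ := (CompleteLattice.isCompactElement_iff_le_of_directed_sSup_le _ _).1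
      hcomp c ⟨A, hA⟩ hchain.directedOn hJc
    exact hc hB J hJ hJ0 hJB h1) I hI
  have hM0 : M ≠ ⊥ := fun h => hI0 (le_bot_iff.1 (h ▸ hIM))
  have hMp : TProper M := hM.1
  have hMt : IsTIdeal R M := by
    refine isTIdeal_iff.2 ⟨hM0, fun J hJ hJ0 hJM x hx => ?_⟩
    have hP : TProper (M ⊔ Ideal.span {x}) := by
      intro A hA hA0 hAM h1
      obtain ⟨B, hB, hB0, hBM, hAB⟩ := exists_common_v (A := A) hM0 hA (by
        intro y hy
        obtain ⟨m, hm, z, hz, rfl⟩ := Submodule.mem_sup.1 (hAM hy)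
        refine ⟨Ideal.span {m} ⊔ J, (Submodule.fg_span_singleton m).sup hJ,
          sup_le (by simpa [Ideal.span_le] using hm) hJM, add_mem ?_ ?_⟩
        · exact le_vIdeal _ (Ideal.mem_sup_left (Ideal.mem_span_singleton_self m))
        · obtain ⟨r, rfl⟩ := Ideal.mem_span_singleton'.1 hz
          exact Ideal.mul_mem_left _ _ (vIdeal_mono le_sup_right hx))
      exact hMp B hB hB0 hBM (vIdeal_le_of_le hAB h1)
    exact hM.2 hP le_sup_left (Ideal.mem_sup_right (Ideal.mem_span_singleton_self x))
  have htop : ∀ A : Ideal R, A = ⊤ → ¬ TProper A := by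
    rintro A rfl h
    exact h ⊤ (Ideal.fg_top R) top_ne_bot le_rfl (le_vIdeal _ trivial)
  exact ⟨M, ⟨hMt, fun h => htop M h hMp,
    fun J hJ hJt hMJ => le_antisymm (hM.2 (hJ.tProper hJt) hMJ) hMJ⟩, hIM⟩

theorem tMax_isPrime [IsDomain R] {M : Ideal R} (hM : M ∈ tMax R) : M.IsPrime := by
  obtain ⟨hMt, hMtop, hmax⟩ := hM
  refine ⟨hMtop, fun {a b} hab => ?_⟩
  by_contra! hcon
  obtain ⟨ha, hb⟩ := hcon
  have hnot : ¬ TProper (M ⊔ Ideal.span {a}) := by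
    intro hp
    obtain ⟨M', hM', hle⟩ := exists_tMax_ge
      (fun h => hMt.1 (le_bot_iff.1 (h ▸ le_sup_left))) hp
    have := hmax M' hM'.1 hM'.2.1 (le_sup_left.trans hle)
    exact ha (this ▸ hle (Ideal.mem_sup_right (Ideal.mem_span_singleton_self a)))
  unfold TProper at hnot
  push Not at hnot
  obtain ⟨J, hJ, hJ0, hJM, h1⟩ := hnot
  have hb0 : b ≠ 0 := fun h => hb (h ▸ zero_mem M)
  -- `b * J` is a finitely generated subideal of `M` with `b ∈ (b * J)_v`.
  refine hb ((isTIdeal_iff.1 hMt).2 (Ideal.span {b} * J)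
    ((Submodule.fg_span_singleton b).mul hJ) ?_ ?_ ?_)
  · simp [hb0, hJ0]
  · rw [Ideal.span_singleton_mul_le_iff]
    intro z hz
    obtain ⟨m, hm, w, hw, rfl⟩ := Submodule.mem_sup.1 (hJM hz)
    obtain ⟨r, rfl⟩ := Ideal.mem_span_singleton'.1 hw
    rw [mul_add]
    refine add_mem (M.mul_mem_left _ hm) ?_
    have : b * (r * a) = r * (a * b) := by ring
    rw [this]
    exact M.mul_mem_left _ hab
  · refine mem_vIdeal_iff.2 fun c d hd h => ?_
    have := mem_vIdeal_iff.1 h1 (c * b) d hd fun j hj => by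
      rw [mul_assoc]
      exact h _ (Ideal.mul_mem_mul (Ideal.mem_span_singleton_self b) hj)
    simpa using this

/-! ### Primes with valuation localization -/

/-- Over a valuation ring `R_P`, a finite set is generated by one of its elements. -/
theorem ValAt.exists_min {P : Ideal R} (hP : P.IsPrime) (hv : ValAt P) {S : Finset R}
    (hS : S.Nonempty) : ∃ j ∈ S, ∃ s, s ∉ P ∧ ∀ y ∈ S, j ∣ s * y := by
  classical
  induction hS using Finset.Nonempty.cons_induction with
  | singleton a =>
    exact ⟨a, by simp, 1, fun h => hP.ne_top ((Ideal.eq_top_iff_one P).2 h), by simp⟩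
  | cons z S _ _ ih =>
    obtain ⟨j, hj, s, hs, h⟩ := ih
    rcases hv z j with ⟨s', hs', hd⟩ | ⟨s', hs', hd⟩
    · refine ⟨j, by simp [hj], s * s', fun hm => (hP.mem_or_mem hm).elim hs hs', fun y hy => ?_⟩
      rcases Finset.mem_cons.1 hy with rfl | hy
      · rw [mul_assoc]; exact hd.mul_left s
      · rw [mul_comm s, mul_assoc]; exact (h y hy).mul_left s'
    · refine ⟨z, by simp, s' * s, fun hm => (hP.mem_or_mem hm).elim hs' hs, fun y hy => ?_⟩
      rcases Finset.mem_cons.1 hy with rfl | hy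
      · exact dvd_mul_left _ _
      · rw [mul_assoc]
        exact hd.trans (mul_dvd_mul_left _ (h y hy))

/-- A nonzero prime with valuation localization is a `t`-ideal. -/
theorem ValAt.isTIdeal [IsDomain R] {P : Ideal R} (hP : P.IsPrime) (hP0 : P ≠ ⊥)
    (hv : ValAt P) : IsTIdeal R P := by
  refine isTIdeal_iff.2 ⟨hP0, fun J hJ hJ0 hJP x hx => ?_⟩
  obtain ⟨S, rfl⟩ := hJ
  have hS : S.Nonempty := by
    rw [Finset.nonempty_iff_ne_empty]
    rintro rfl
    exact hJ0 (by simp)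
  obtain ⟨j, hj, s, hs, h⟩ := hv.exists_min hP hS
  have hall : ∀ y ∈ Submodule.span R (S : Set R), j ∣ s * y := by
    intro y hy
    induction hy using Submodule.span_induction with
    | mem y hy => exact h y hy
    | zero => simp
    | add y z _ _ h1 h2 => rw [mul_add]; exact dvd_add h1 h2
    | smul r y _ h1 => rw [smul_eq_mul, mul_left_comm]; exact h1.mul_left r
  have hj0 : j ≠ 0 := by
    rintro rfl
    refine hJ0 ((Submodule.eq_bot_iff _).2 fun y hy => ?_)
    exact (mul_eq_zero.1 (zero_dvd_iff.1 (hall y hy))).resolve_left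
      fun h0 => hs (h0 ▸ zero_mem P)
  obtain ⟨c, hc⟩ := mem_vIdeal_iff.1 hx s j hj0 hall
  have : s * x ∈ P := hc ▸ P.mul_mem_right c (hJP (Submodule.subset_span hj))
  exact (hP.mem_or_mem this).resolve_left hs

theorem IsPVMD.valAt_tMax [IsDomain R] (hR : IsPVMD R) {M : Ideal R} (hM : M ∈ tMax R) :
    ValAt M := by
  intro a b
  have h1 : (1 : R) ∉ M := fun h => hM.2.1 ((Ideal.eq_top_iff_one M).2 h)
  by_cases ha : a = 0
  · exact Or.inl ⟨1, h1, by simp [ha]⟩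
  by_cases hb : b = 0
  · exact Or.inr ⟨1, h1, by simp [hb]⟩
  have ha' := algebraMap_ne ha
  have hb' := algebraMap_ne hb
  refine (hR M hM (algebraMap R (FractionRing R) a / algebraMap R (FractionRing R) b)
    (div_ne_zero ha' hb')).imp (fun h => ?_) (fun h => ?_)
  · exact (mem_locSet_iff hb (div_mul_cancel₀ _ hb') M).1 h
  · rw [inv_div] at h
    exact (mem_locSet_iff ha (div_mul_cancel₀ _ ha') M).1 h

theorem IsPVMD.valAt [IsDomain R] (hR : IsPVMD R) {P : Ideal R} (hP0 : P ≠ ⊥)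
    (hP : TProper P) : ValAt P := by
  obtain ⟨M, hM, hPM⟩ := exists_tMax_ge hP0 hP
  exact (hR.valAt_tMax hM).mono hPM

theorem IsPVMD.valAt_tPrime [IsDomain R] (hR : IsPVMD R) {P : Ideal R} (hP : IsTPrime R P) :
    ValAt P := hR.valAt hP.2.1 (hP.2.tProper hP.1.ne_top)

/-! ### Overrings -/

/-- `f : R → T` makes `T` an overring of the domain `R`: it is injective, and each element of `T`
is a quotient of elements of `R`. -/
structure IsOver (f : R →+* T) : Prop where
  inj : Function.Injective f
  frac : ∀ t : T, ∃ b r : R, b ≠ 0 ∧ f b * t = f r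

/-- The `t`-linked condition for `f : R → T`, expressed through `v`-closures. -/
def Linked (f : R →+* T) : Prop :=
  ∀ I : Ideal R, I ≠ ⊥ → I.FG → (1 : R) ∈ vIdeal R I → (1 : T) ∈ vIdeal T (I.map f)

variable {f : R →+* T}

theorem IsOver.ne (hf : IsOver f) {b : R} (hb : b ≠ 0) : f b ≠ 0 :=
  fun h => hb (hf.inj (by rw [h, map_zero]))

theorem exists_common_frac [IsDomain R] (hf : IsOver f) (t u : T) :
    ∃ d a b : R, d ≠ 0 ∧ f d * t = f a ∧ f d * u = f b := by
  obtain ⟨d, a, hd, h1⟩ := hf.frac t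
  obtain ⟨e, b, he, h2⟩ := hf.frac u
  refine ⟨d * e, e * a, d * b, mul_ne_zero hd he, ?_, ?_⟩
  · rw [map_mul, map_mul, ← h1]; ring
  · rw [map_mul, map_mul, ← h2]; ring

variable [IsDomain T]

/-- `T_N = R_{N ∩ R}` when `R_{N ∩ R}` is a valuation ring. -/
theorem locDvd_comap_iff (hf : IsOver f) {N : Ideal T} (hN : N.IsPrime)
    (hv : ValAt (N.comap f)) {a b : R} :
    LocDvd N (f a) (f b) ↔ LocDvd (N.comap f) a b := by
  constructor
  · rintro ⟨s, hs, t, ht⟩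
    rcases hv a b with h | ⟨s', hs', c, hc⟩
    · exact h
    by_cases hcP : c ∈ N.comap f
    · by_cases ha : a = 0
      · exact ⟨s', hs', by simp [ha]⟩
      · exfalso
        have hc' : f s' * f b = f a * f c := by rw [← map_mul, hc, map_mul]
        have : f s' * s = f c * t := mul_left_cancel₀ (hf.ne ha) (by
          calc f a * (f s' * s) = f s' * (s * f a) := by ring
            _ = (f s' * f b) * t := by rw [ht]; ring
            _ = f a * (f c * t) := by rw [hc']; ring)
        have hm : f s' * s ∈ N := this ▸ N.mul_mem_right t hcP
        exact (hN.mem_or_mem hm).elim hs' hs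
    · exact ⟨c, hcP, s', by rw [mul_comm c, ← hc, mul_comm]⟩
  · rintro ⟨s, hs, h⟩
    exact ⟨f s, hs, by rw [← map_mul]; exact map_dvd f h⟩

/-- The contraction of primes of `T` to `R` reflects inclusions. -/
theorem le_of_comap_le (hf : IsOver f) {N N' : Ideal T} (hN' : N'.IsPrime)
    (hv : ValAt (N'.comap f)) (h : N.comap f ≤ N'.comap f) : N ≤ N' := by
  intro n hn
  by_contra hn'
  obtain ⟨b, a, hb, hba⟩ := hf.frac n
  obtain ⟨s, hs, c, hc⟩ := (locDvd_comap_iff hf hN' hv (a := b) (b := a)).1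
    ⟨n, hn', by rw [← hba, mul_comm]⟩
  have : f s = n * f c := mul_left_cancel₀ (hf.ne hb) (by
    rw [← mul_assoc, hba, ← map_mul, ← map_mul, ← hc, mul_comm])
  exact hs (h (by rw [Ideal.mem_comap, this]; exact N.mul_mem_right _ hn))

variable [IsDomain R]

/-- In a `t`-linked overring of a PVMD, maximal `t`-ideals contract to `t`-primes. -/
theorem comap_isTPrime (hR : IsPVMD R) (hf : IsOver f) (hl : Linked f) {N : Ideal T}
    (hN : N ∈ tMax T) : IsTPrime R (N.comap f) := by
  have hNp := tMax_isPrime hN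
  have hP : (N.comap f).IsPrime := Ideal.comap_isPrime f N
  have hP0 : N.comap f ≠ ⊥ := by
    obtain ⟨n, hn, hn0⟩ := Submodule.exists_mem_ne_zero_of_ne_bot hN.1.1
    obtain ⟨b, r, hb, hbr⟩ := hf.frac n
    intro h
    have hr : r ∈ N.comap f := by
      rw [Ideal.mem_comap, ← hbr]
      exact N.mul_mem_left _ hn
    rw [h, Ideal.mem_bot] at hr
    rw [hr, map_zero] at hbr
    exact (mul_ne_zero (hf.ne hb) hn0) hbr
  refine ⟨hP, (hR.valAt hP0 ?_).isTIdeal hP hP0⟩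
  intro J hJ hJ0 hJP h1
  refine hN.1.tProper hN.2.1 (J.map f) (hJ.map f) ?_ (Ideal.map_le_iff_le_comap.2 hJP)
    (hl J hJ0 hJ h1)
  rwa [Ne, Ideal.map_eq_bot_iff_of_injective hf.inj]

theorem iInter_locSet_eq_iff (Λ₁ Λ₂ : Set (Ideal R)) :
    (⋂ M ∈ Λ₁, locSet R M) = (⋂ M ∈ Λ₂, locSet R M) ↔
      ∀ a b : R, b ≠ 0 → ((∀ M ∈ Λ₁, LocDvd M a b) ↔ ∀ M ∈ Λ₂, LocDvd M a b) := by
  simp only [Set.ext_iff, Set.mem_iInter]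
  constructor
  · intro h a b hb
    have hx := div_mul_cancel₀ (algebraMap R (FractionRing R) a) (algebraMap_ne hb)
    have := h (algebraMap R (FractionRing R) a / algebraMap R (FractionRing R) b)
    simpa only [mem_locSet_iff hb hx] using this
  · intro h x
    obtain ⟨a, b, hb, hx⟩ := exists_frac x
    simpa only [mem_locSet_iff hb hx] using h a b hb

theorem RPhi_eq {Λ : Set (Ideal R)} :
    RPhi R Λ = ⋂ P ∈ Λ, locSet R P := by
  ext x
  simp only [Set.mem_iInter]
  constructor
  · rintro ⟨I, ⟨_, hI⟩, h⟩ P hP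
    obtain ⟨s, hs, hsP⟩ := SetLike.not_le_iff_exists.1 (hI P hP)
    obtain ⟨r, hr⟩ := h s hs
    exact ⟨r, s, hsP, hr.symm⟩
  · intro h
    obtain ⟨a, b, hb, hx⟩ := exists_frac x
    -- The ideal `(R : x)`.
    let I : Ideal R := Submodule.comap (LinearMap.mulLeft R a) (Ideal.span {b})
    have hI : ∀ r, r ∈ I ↔ b ∣ a * r := fun r => by
      simp [I, Submodule.mem_comap, Ideal.mem_span_singleton]
    refine ⟨I, ⟨isTIdeal_iff.2 ⟨?_, ?_⟩, ?_⟩, ?_⟩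
    · intro h0
      have : b ∈ I := (hI b).2 (dvd_mul_left _ _)
      rw [h0] at this
      exact hb (by simpa using this)
    · intro J _ _ hJI y hy
      exact (hI y).2 (mem_vIdeal_iff.1 hy a b hb fun j hj => (hI j).1 (hJI hj))
    · intro P hP hle
      obtain ⟨s, hs, hd⟩ := (mem_locSet_iff hb hx P).1 (h P hP)
      exact hs (hle ((hI s).2 (by rwa [mul_comm])))
    · intro r hr
      exact (mem_range_iff_dvd hb hx r).2 ((hI r).1 hr)

/-- A `t`-linked overring of a `t#_P` PVMD is a `t#`-domain: `N ↦ N ∩ R` carries distinct sets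
of maximal `t`-ideals to distinct, pairwise `t`-comaximal sets of `t`-primes. -/
theorem tSharp_of_tSharpP (hR : IsPVMD R) (hf : IsOver f) (hl : Linked f)
    (hS : IsTSharpP R) : IsTSharp T := by
  intro 𝔐₁ 𝔐₂ h1 h2 hne heq
  have htp : ∀ N ∈ tMax T, IsTPrime R (N.comap f) := fun N hN => comap_isTPrime hR hf hl hN
  have hval : ∀ N ∈ tMax T, ValAt (N.comap f) := fun N hN => hR.valAt_tPrime (htp N hN)
  have hinj : ∀ N ∈ tMax T, ∀ N' ∈ tMax T, N.comap f ≤ N'.comap f → N = N' :=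
    fun N hN N' hN' h =>
      (hN.2.2 N' hN'.1 hN'.2.1 (le_of_comap_le hf (tMax_isPrime hN') (hval N' hN') h)).symm
  have himg : ∀ A B : Set (Ideal T), A ⊆ tMax T → B ⊆ tMax T →
      Ideal.comap f '' A = Ideal.comap f '' B → A ⊆ B := by
    intro A B hA hB h N hN
    obtain ⟨N', hN', h'⟩ := h ▸ Set.mem_image_of_mem (Ideal.comap f) hN
    exact hinj N' (hB hN') N (hA hN) h'.le ▸ hN'
  refine hS (Ideal.comap f '' 𝔐₁) (Ideal.comap f '' 𝔐₂) ?_ ?_ ?_ ?_ ?_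
  · rintro _ ⟨N, hN, rfl⟩; exact htp N (h1 hN)
  · rintro _ ⟨N, hN, rfl⟩; exact htp N (h2 hN)
  · rintro _ ⟨N, hN, rfl⟩ _ ⟨N', hN', rfl⟩ hNN
    by_contra htop
    obtain ⟨M, hM, hle⟩ := exists_tMax_ge
      (fun h => (htp N (h1 hN)).2.1 (le_bot_iff.1 (h ▸ le_sup_left)))
      (tProper_of_tIdeal_ne_top htop)
    have hNM := le_sup_left.trans hle
    have hNM' := le_sup_right.trans hle
    -- Primes inside `M` are comparable, as `R_M` is a valuation ring.
    have hcomp : N.comap f ≤ N'.comap f ∨ N'.comap f ≤ N.comap f := by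
      by_contra! hcon
      obtain ⟨a, ha, ha'⟩ := SetLike.not_le_iff_exists.1 hcon.1
      obtain ⟨b, hb, hb'⟩ := SetLike.not_le_iff_exists.1 hcon.2
      have hp := (htp N (h1 hN)).1
      have hp' := (htp N' (h2 hN')).1
      rcases hR.valAt_tMax hM a b with ⟨s, hs, c, hc⟩ | ⟨s, hs, c, hc⟩
      · have : s * a ∈ N'.comap f := hc ▸ Ideal.mul_mem_right c _ hb
        exact (hp'.mem_or_mem this).elim (fun h => hs (hNM' h)) ha'
      · have : s * b ∈ N.comap f := hc ▸ Ideal.mul_mem_right c _ ha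
        exact (hp.mem_or_mem this).elim (fun h => hs (hNM h)) hb'
    rcases hcomp with h | h
    · exact hNN (by rw [hinj N (h1 hN) N' (h2 hN') h])
    · exact hNN (by rw [hinj N' (h2 hN') N (h1 hN) h])
  · exact fun h => hne (subset_antisymm (himg _ _ h1 h2 h) (himg _ _ h2 h1 h.symm))
  · rw [RPhi_eq, RPhi_eq, iInter_locSet_eq_iff]
    rw [iInter_locSet_eq_iff] at heq
    intro a b hb
    have := heq (f a) (f b) (hf.ne hb)
    simp only [Set.forall_mem_image]
    have e : ∀ A : Set (Ideal T), A ⊆ tMax T →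
        ((∀ N ∈ A, LocDvd N (f a) (f b)) ↔ ∀ ⦃N⦄, N ∈ A → LocDvd (N.comap f) a b) :=
      fun A hA => forall₂_congr fun N hN =>
        locDvd_comap_iff hf (tMax_isPrime (hA hN)) (hval N (hA hN))
    rw [← e _ h1, ← e _ h2, this]

omit [IsDomain T] [IsDomain R] in
theorem one_notMem {P : Ideal R} (hP : P.IsPrime) : (1 : R) ∉ P :=
  fun h => hP.ne_top ((Ideal.eq_top_iff_one P).2 h)

/-- The ideal `P R_P ∩ T` of an overring `T` with `T ⊆ R_P` (hypothesis `hT`). -/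
def extPrime (f : R →+* T) (P : Ideal R) (hP : P.IsPrime)
    (hT : ∀ t, ∃ s, s ∉ P ∧ ∃ r, f s * t = f r) : Ideal T where
  carrier := {t | ∃ s, s ∉ P ∧ ∃ r ∈ P, f s * t = f r}
  zero_mem' := ⟨1, one_notMem hP, 0, zero_mem P, by simp⟩
  add_mem' := by
    rintro t u ⟨s, hs, r, hr, h⟩ ⟨s', hs', r', hr', h'⟩
    refine ⟨s * s', fun hm => (hP.mem_or_mem hm).elim hs hs', s' * r + s * r',
      add_mem (P.mul_mem_left _ hr) (P.mul_mem_left _ hr'), ?_⟩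
    rw [map_add, map_mul, map_mul, map_mul, ← h, ← h']; ring
  smul_mem' := by
    rintro c t ⟨s, hs, r, hr, h⟩
    obtain ⟨s', hs', r', h'⟩ := hT c
    refine ⟨s * s', fun hm => (hP.mem_or_mem hm).elim hs hs', r' * r, P.mul_mem_left _ hr, ?_⟩
    rw [smul_eq_mul, map_mul, map_mul, ← h, ← h']; ring

section ExtPrime

variable {P : Ideal R} {hP : P.IsPrime} {hT : ∀ t, ∃ s, s ∉ P ∧ ∃ r, f s * t = f r}

omit [IsDomain T] [IsDomain R] in
theorem mem_extPrime {t : T} :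
    t ∈ extPrime f P hP hT ↔ ∃ s, s ∉ P ∧ ∃ r ∈ P, f s * t = f r := Iff.rfl

omit [IsDomain T] [IsDomain R] in
theorem mem_extPrime_iff (hf : IsOver f) {t : T} {s r : R} (hs : s ∉ P) (h : f s * t = f r) :
    t ∈ extPrime f P hP hT ↔ r ∈ P := by
  rw [mem_extPrime]
  refine ⟨?_, fun hr => ⟨s, hs, r, hr, h⟩⟩
  rintro ⟨s', hs', r', hr', h'⟩
  have : s' * r = s * r' := hf.inj (by rw [map_mul, map_mul, ← h, ← h']; ring)
  exact (hP.mem_or_mem (this ▸ P.mul_mem_left s hr' : s' * r ∈ P)).resolve_left hs'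

omit [IsDomain T] [IsDomain R] in
theorem comap_extPrime (hf : IsOver f) : (extPrime f P hP hT).comap f = P := by
  ext r
  rw [Ideal.mem_comap, mem_extPrime_iff hf (s := 1) (r := r) (one_notMem hP) (by rw [map_one, one_mul])]

omit [IsDomain T] [IsDomain R] in
theorem extPrime_isPrime (hf : IsOver f) : (extPrime f P hP hT).IsPrime := by
  constructor
  · rw [Ne, Ideal.eq_top_iff_one,
      mem_extPrime_iff hf (s := 1) (r := 1) (one_notMem hP) (by rw [mul_one])]
    exact one_notMem hP
  · intro t u htu
    obtain ⟨s, hs, r, h⟩ := hT t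
    obtain ⟨s', hs', r', h'⟩ := hT u
    have hss : s * s' ∉ P := fun hm => (hP.mem_or_mem hm).elim hs hs'
    rw [mem_extPrime_iff hf hss (r := r * r')
      (by rw [map_mul, map_mul, ← h, ← h']; ring)] at htu
    rw [mem_extPrime_iff hf hs h, mem_extPrime_iff hf hs' h']
    exact hP.mem_or_mem htu

omit [IsDomain R] in
theorem extPrime_valAt (hf : IsOver f) (hv : ValAt P) : ValAt (extPrime f P hP hT) := by
  have hne : ∀ s, s ∉ P → f s ≠ 0 := fun s hs => hf.ne fun h0 => hs (h0 ▸ zero_mem P)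
  have key : ∀ (t u : T) (s r s' r' : R), s ∉ P → s' ∉ P → f s * t = f r → f s' * u = f r' →
      LocDvd P (s' * r) (s * r') → LocDvd (extPrime f P hP hT) t u := by
    rintro t u s r s' r' hs hs' h h' ⟨w, hw, hd⟩
    have hw' : f w ∉ extPrime f P hP hT := by
      rwa [← Ideal.mem_comap, comap_extPrime hf]
    refine ⟨f w, hw', ?_⟩
    have h1 := map_dvd f hd
    rw [map_mul, map_mul, map_mul, ← h, ← h'] at h1
    rw [← mul_dvd_mul_iff_left (mul_ne_zero (hne s hs) (hne s' hs'))]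
    convert h1 using 1 <;> ring
  intro t u
  obtain ⟨s, hs, r, h⟩ := hT t
  obtain ⟨s', hs', r', h'⟩ := hT u
  rcases hv (s' * r) (s * r') with hd | hd
  · exact Or.inl (key t u s r s' r' hs hs' h h' hd)
  · exact Or.inr (key u t s' r' s r hs' hs h' h hd)

/-- A `t`-prime `P` of the PVMD `R` with `T ⊆ R_P` lies under a maximal `t`-ideal of `T`. -/
theorem exists_tMax_ge_extPrime (hR : IsPVMD R) (hf : IsOver f) (hPt : IsTPrime R P) :
    ∃ N ∈ tMax T, extPrime f P hP hT ≤ N := by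
  have hne : extPrime f P hP hT ≠ ⊥ := by
    intro h
    have := comap_extPrime (hP := hP) (hT := hT) hf
    rw [h, Ideal.comap_bot_of_injective f hf.inj] at this
    exact hPt.2.1 this.symm
  have hpr := extPrime_isPrime (hP := hP) (hT := hT) hf
  exact exists_tMax_ge hne
    (((extPrime_valAt hf (hR.valAt_tPrime hPt)).isTIdeal hpr hne).tProper hpr.ne_top)

end ExtPrime

/-- Let `T` be a `t`-linked `t#`-overring of a PVMD `R` with `T = ⋂_{Q ∈ Λ} R_Q` for a set `Λ`
of `t`-primes. No `t`-prime `P` with `T ⊆ R_P` is `t`-comaximal to every `Q ∈ Λ`: a maximal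
`t`-ideal `N` of `T` over `P` would be redundant in `T = ⋂ T_N`. -/
theorem not_comaximal (hR : IsPVMD R) (hf : IsOver f) (hl : Linked f) (hS : IsTSharp T)
    {Λ : Set (Ideal R)} (hΛ : ∀ Q ∈ Λ, IsTPrime R Q)
    (hΛT : ∀ Q ∈ Λ, ∀ t, ∃ s, s ∉ Q ∧ ∃ r, f s * t = f r)
    (hTΛ : ∀ a b : R, b ≠ 0 → (∀ Q ∈ Λ, LocDvd Q a b) → f b ∣ f a)
    {P : Ideal R} (hP : IsTPrime R P) (hPT : ∀ t, ∃ s, s ∉ P ∧ ∃ r, f s * t = f r) :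
    ∃ Q ∈ Λ, tIdeal R (P ⊔ Q) ≠ ⊤ := by
  by_contra! hcom
  obtain ⟨N, hN, hPN⟩ := exists_tMax_ge_extPrime (hP := hP.1) (hT := hPT) hR hf hP
  refine hS (tMax T) (tMax T \ {N}) subset_rfl Set.sdiff_subset
    (fun h => (h ▸ hN : N ∈ tMax T \ {N}).2 rfl) ?_
  rw [iInter_locSet_eq_iff]
  refine fun a b hb => ⟨fun h M hM => h M hM.1, fun h => ?_⟩
  suffices hdvd : b ∣ a from fun M hM => ⟨1, one_notMem (tMax_isPrime hM), by rwa [one_mul]⟩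
  obtain ⟨d, a', b', hd, ha', hb'⟩ := exists_common_frac hf a b
  rw [← mul_dvd_mul_iff_left (hf.ne hd), ha', hb']
  have hb0 : b' ≠ 0 := by
    rintro rfl
    rw [map_zero] at hb'
    exact mul_ne_zero (hf.ne hd) hb hb'
  refine hTΛ a' b' hb0 fun Q hQ => ?_
  have hQp := (hΛ Q hQ).1
  obtain ⟨M, hM, hQM⟩ := exists_tMax_ge_extPrime (hP := hQp) (hT := hΛT Q hQ) hR hf (hΛ Q hQ)
  have hMN : M ≠ N := by
    rintro rfl
    have hMt := comap_isTPrime hR hf hl hM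
    refine hMt.1.ne_top (top_le_iff.1 ((hcom Q hQ).ge.trans (tIdeal_le_of_le hMt.2 (sup_le ?_ ?_))))
    · rw [← comap_extPrime (hP := hP.1) (hT := hPT) hf]; exact Ideal.comap_mono hPN
    · rw [← comap_extPrime (hP := hQp) (hT := hΛT Q hQ) hf]; exact Ideal.comap_mono hQM
  obtain ⟨s, hs, c, hc⟩ := h M ⟨hM, hMN⟩
  obtain ⟨w, hw, r, hr⟩ := hΛT Q hQ s
  obtain ⟨w', hw', r', hr'⟩ := hΛT Q hQ c
  have hrQ : r ∉ Q := fun h =>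
    hs (hQM ((mem_extPrime_iff (hP := hQp) (hT := hΛT Q hQ) hf hw hr).2 h))
  refine ⟨r * w', fun hm => (hQp.mem_or_mem hm).elim hrQ hw', w * r', hf.inj ?_⟩
  simp only [map_mul, ← hr, ← hr', ← ha', ← hb']
  linear_combination (f w * f w' * f d) * hc

/-! ### Subrings of the quotient field -/

omit [IsDomain T] in
theorem isOver_intoOverring (S : Subring (FractionRing R)) (h : IsOverring R S) :
    IsOver (intoOverring R S h) where
  inj a b hab := algebraMap_inj (congrArg Subtype.val hab)
  frac t := by
    obtain ⟨a, b, hb, hx⟩ := exists_frac (t : FractionRing R)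
    exact ⟨b, a, hb, Subtype.ext ((mul_comm _ _).trans hx)⟩

omit [IsDomain T] in
theorem one_mem_vIdeal_iff {I : Ideal R} :
    (1 : R) ∈ vIdeal R I ↔ (1 : Submodule R (FractionRing R)) / idealSub R I = 1 := by
  rw [mem_vIdeal_iff]
  constructor
  · intro h
    refine le_antisymm (fun x hx => ?_) ?_
    · obtain ⟨a, b, hb, hxab⟩ := exists_frac x
      obtain ⟨r, hr⟩ := (mem_range_iff_dvd hb hxab 1).2 (h a b hb ((mem_inv_iff hb hxab I).1 hx))
      exact Submodule.mem_one.2 ⟨r, by rw [hr, map_one, mul_one]⟩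
    · intro x hx
      obtain ⟨r, rfl⟩ := Submodule.mem_one.1 hx
      exact (mem_inv_iff (a := r) one_ne_zero (by rw [map_one, mul_one]) I).2
        fun j _ => one_dvd _
  · intro h a b hb hab
    have hx := div_mul_cancel₀ (algebraMap R (FractionRing R) a) (algebraMap_ne hb)
    have hm := (mem_inv_iff hb hx I).2 hab
    rw [h] at hm
    obtain ⟨r, hr⟩ := Submodule.mem_one.1 hm
    exact (mem_range_iff_dvd hb hx 1).1 ⟨r, by rw [hr, map_one, mul_one]⟩

omit [IsDomain T] in
theorem linked_of_isTLinked {S : Subring (FractionRing R)} (h : IsOverring R S)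
    (hS : IsTLinked R S) : Linked (intoOverring R S h) := by
  intro I hI0 hI h1
  rw [mem_vIdeal_iff]
  intro a b hb hab
  have hb' : (b : FractionRing R) ≠ 0 := fun h0 => hb (Subtype.ext h0)
  have hmem : (a : FractionRing R) / b ∈ S := by
    have hset := hS I hI0 hI (one_mem_vIdeal_iff.1 h1)
    rw [← SetLike.mem_coe, ← hset]
    intro i hi
    obtain ⟨c, hc⟩ := hab _ (Ideal.mem_map_of_mem _ hi)
    have hc' : (a : FractionRing R) * algebraMap R (FractionRing R) i = b * c :=
      congrArg Subtype.val hc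
    have : (a : FractionRing R) / b * algebraMap R (FractionRing R) i = c := by
      rw [div_mul_eq_mul_div, hc', mul_div_cancel_left₀ _ hb']
    rw [this]
    exact c.2
  refine ⟨⟨_, hmem⟩, Subtype.ext ?_⟩
  change (a : FractionRing R) * 1 = b * (a / b)
  rw [mul_div_cancel₀ _ hb', mul_one]

/-- The subring `⋂_{P ∈ Λ} R_P` of the quotient field. -/
def interSubring (Λ : Set (Ideal R)) (hΛ : ∀ P ∈ Λ, P.IsPrime) : Subring (FractionRing R) where
  carrier := ⋂ P ∈ Λ, locSet R P
  one_mem' := Set.mem_iInter₂.2 fun P hP => ⟨1, 1, one_notMem (hΛ P hP), by rw [one_mul]⟩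
  zero_mem' := Set.mem_iInter₂.2 fun P hP => ⟨0, 1, one_notMem (hΛ P hP), by simp⟩
  mul_mem' := by
    intro x y hx hy
    refine Set.mem_iInter₂.2 fun P hP => ?_
    obtain ⟨r, s, hs, h⟩ := Set.mem_iInter₂.1 hx P hP
    obtain ⟨r', s', hs', h'⟩ := Set.mem_iInter₂.1 hy P hP
    refine ⟨r * r', s * s', fun hm => ((hΛ P hP).mem_or_mem hm).elim hs hs', ?_⟩
    rw [map_mul, map_mul, ← h, ← h']; ring
  add_mem' := by
    intro x y hx hy
    refine Set.mem_iInter₂.2 fun P hP => ?_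
    obtain ⟨r, s, hs, h⟩ := Set.mem_iInter₂.1 hx P hP
    obtain ⟨r', s', hs', h'⟩ := Set.mem_iInter₂.1 hy P hP
    refine ⟨s' * r + s * r', s * s', fun hm => ((hΛ P hP).mem_or_mem hm).elim hs hs', ?_⟩
    rw [map_add, map_mul, map_mul, map_mul, ← h, ← h']; ring
  neg_mem' := by
    intro x hx
    refine Set.mem_iInter₂.2 fun P hP => ?_
    obtain ⟨r, s, hs, h⟩ := Set.mem_iInter₂.1 hx P hP
    exact ⟨-r, s, hs, by rw [neg_mul, h, map_neg]⟩

section InterSubring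

variable {Λ : Set (Ideal R)} {hΛ : ∀ P ∈ Λ, P.IsPrime}

omit [IsDomain T] [IsDomain R] in
theorem mem_interSubring {x : FractionRing R} :
    x ∈ interSubring Λ hΛ ↔ ∀ P ∈ Λ, x ∈ locSet R P := Set.mem_iInter₂

omit [IsDomain T] [IsDomain R] in
theorem isOverring_interSubring : IsOverring R (interSubring Λ hΛ) := fun r =>
  mem_interSubring.2 fun P hP => ⟨r, 1, one_notMem (hΛ P hP), by rw [map_one, mul_one]⟩

omit [IsDomain T] in
/-- Intersections of localizations at `t`-primes are `t`-linked: an ideal `I` with `I_v = R` lies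
in no `t`-prime. -/
theorem isTLinked_interSubring (ht : ∀ P ∈ Λ, IsTPrime R P) :
    IsTLinked R (interSubring Λ hΛ) := by
  intro I hI0 hI h1
  ext x
  refine ⟨fun hx => mem_interSubring.2 fun P hP => ?_,
    fun hx a _ => mul_mem hx (isOverring_interSubring a)⟩
  have hnle : ¬ I ≤ P := fun hle =>
    (ht P hP).2.tProper (hΛ P hP).ne_top I hI hI0 hle (one_mem_vIdeal_iff.2 h1)
  obtain ⟨i, hi, hiP⟩ := SetLike.not_le_iff_exists.1 hnle
  obtain ⟨r, s, hs, h⟩ := mem_interSubring.1 (hx i hi) P hP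
  exact ⟨r, i * s, fun hm => ((hΛ P hP).mem_or_mem hm).elim hiP hs, by
    rw [map_mul, ← mul_assoc, h]⟩

end InterSubring

omit [IsDomain T] in
/-- One inclusion between two sets of `t`-primes that are `t`-comaximal and define the same
overring. -/
theorem subset_of_RPhi_eq (hR : IsPVMD R)
    (h : ∀ S : Subring (FractionRing R), IsOverring R S → IsTLinked R S → IsTSharp ↥S)
    {Λ₁ Λ₂ : Set (Ideal R)} (h1 : ∀ P ∈ Λ₁, IsTPrime R P) (h2 : ∀ Q ∈ Λ₂, IsTPrime R Q)
    (hcom : ∀ P ∈ Λ₁, ∀ Q ∈ Λ₂, P ≠ Q → tIdeal R (P ⊔ Q) = ⊤)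
    (heq : RPhi R Λ₁ = RPhi R Λ₂) : Λ₁ ⊆ Λ₂ := by
  intro P hP
  by_contra hP2
  rw [RPhi_eq, RPhi_eq] at heq
  have hΛ : ∀ Q ∈ Λ₂, Q.IsPrime := fun Q hQ => (h2 Q hQ).1
  have ho : IsOverring R (interSubring Λ₂ hΛ) := isOverring_interSubring
  have hl : IsTLinked R (interSubring Λ₂ hΛ) := isTLinked_interSubring h2
  have hloc : ∀ Q : Ideal R, (∀ x ∈ interSubring Λ₂ hΛ, x ∈ locSet R Q) →
      ∀ t, ∃ s, s ∉ Q ∧ ∃ r, intoOverring R (interSubring Λ₂ hΛ) ho s * t =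
        intoOverring R (interSubring Λ₂ hΛ) ho r := by
    intro Q hQ t
    obtain ⟨r, s, hs, hrs⟩ := hQ t t.2
    exact ⟨s, hs, r, Subtype.ext ((mul_comm _ _).trans hrs)⟩
  have hdvd : ∀ a b : R, b ≠ 0 → (∀ Q ∈ Λ₂, LocDvd Q a b) →
      intoOverring R (interSubring Λ₂ hΛ) ho b ∣ intoOverring R (interSubring Λ₂ hΛ) ho a := by
    intro a b hb hab
    have hx := div_mul_cancel₀ (algebraMap R (FractionRing R) a) (algebraMap_ne hb)
    exact ⟨⟨_, mem_interSubring.2 fun Q hQ => (mem_locSet_iff hb hx Q).2 (hab Q hQ)⟩,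
      Subtype.ext (((mul_comm _ _).trans hx).symm)⟩
  obtain ⟨Q, hQ, hne⟩ := not_comaximal hR (isOver_intoOverring _ ho)
    (linked_of_isTLinked ho hl) (h _ ho hl) h2
    (fun Q hQ => hloc Q fun x hx => mem_interSubring.1 hx Q hQ) hdvd (h1 P hP)
    (hloc P fun x hx => by
      have hx' : x ∈ ⋂ Q ∈ Λ₂, locSet R Q := hx
      rw [← heq] at hx'
      exact Set.mem_iInter₂.1 hx' P hP)
  exact hne (hcom P hP Q hQ fun hPQ => hP2 (hPQ ▸ hQ))

end Helpers

/-- **Proposition (2.11).**  A PVMD `R` is a `t#_P`-domain if and only if each `t`-linked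
overring of `R` is a `t#`-domain. -/
theorem pvmd_tSharpP_iff_tlinked_tsharp (R : Type*) [CommRing R] [IsDomain R]
    (hR : IsPVMD R) :
    IsTSharpP R ↔
      ∀ T : Subring (FractionRing R), IsOverring R T → IsTLinked R T → IsTSharp ↥T := by
  constructor
  · intro hS T ho hl
    exact tSharp_of_tSharpP hR (isOver_intoOverring T ho) (linked_of_isTLinked ho hl) hS
  · intro h Λ₁ Λ₂ h1 h2 hcom hne heq
    exact hne (subset_antisymm (subset_of_RPhi_eq hR h h1 h2 hcom heq)
      (subset_of_RPhi_eq hR h h2 h1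
        (fun Q hQ P hP hQP => by rw [sup_comm]; exact hcom P hP Q hQ hQP.symm) heq.symm))

end TSharpPaper
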